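/- arXiv:2001.00607 — 3 statements merged into one kernel-verified Lean document; each statement's English description precedes it below -/
import Mathlib

section
/- Let K ≥ 1 and let F ∈ ℝ^{K×K} be invertible. Then for every m ∈ {1,…,K}, the successive minima of the lattice generated by F and of its dual lattice satisfy λ_m(F) · λ_{K−m+1}(F^{-T}) ≤ K. -/
/-!
For an invertible `G` and a unit vector `u`, consider the second moments in direction `u` of the
discrete Gaussians, with weights `exp (-π ‖x‖²)`, on the lattice of `G` and on its dual. Poisson
summation relates the theta constant of `stretch u α * G` to that of its dual, and differentiating
this relation at `α = 1` shows that the two second moments add up to `1 / (2 π)`.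

The lattice points shorter than `λ_m` span a space of dimension less than `m`, and the dual points
shorter than `λ*_{K-m+1}` one of dimension less than `K - m + 1`, so some unit vector `u` is
orthogonal to both. Only the remaining points contribute to the second moments. If
`λ_m λ*_{K-m+1} > K`, both lattices can be scaled (the dual one inversely) so that these points have
norm at least `√K`. For `K ≥ 2` the Gaussian tail beyond that radius is so small that each moment is
less than `1 / (4 π)`, a contradiction. For `K = 1` the bound is an equality, which this estimate
cannot reach, but there it is immediate.
-/

open Matrix

/-- Euclidean norm of a vector in `ℝ^n`. -/
noncomputable def euclNorm {n : ℕ} (x : Fin n → ℝ) : ℝ := Real.sqrt (∑ i, x i ^ 2)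

/-- The lattice generated by the matrix `F`: all integer combinations of its columns. -/
def latticeOf {K : ℕ} (F : Matrix (Fin K) (Fin K) ℝ) : Set (Fin K → ℝ) :=
  {x | ∃ w : Fin K → ℤ, x = F.mulVec fun i => (w i : ℝ)}

/-- The `m`-th successive minimum of the lattice generated by `F`: the infimum of radii `r > 0`
such that the closed ball of radius `r` contains `m` linearly independent lattice points. -/
noncomputable def succMin {K : ℕ} (F : Matrix (Fin K) (Fin K) ℝ) (m : ℕ) : ℝ :=
  sInf {r : ℝ | 0 < r ∧ ∃ s : Finset (Fin K → ℝ),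
    (↑s : Set (Fin K → ℝ)) ⊆ latticeOf F ∧ (∀ v ∈ s, euclNorm v ≤ r) ∧
    s.card = m ∧ LinearIndependent ℝ (fun v : s => (v : Fin K → ℝ))}

namespace Transference

open MeasureTheory Set Topology Function UnitAddTorus

open Real (exp)

open scoped Real

variable {ι : Type*}

/-- The integer vector `w` as a real vector. -/
def intVec (w : ι → ℤ) : ι → ℝ := fun i ↦ (w i : ℝ)

section Poisson

/-- The half-open unit cube, a fundamental domain for the translations by integer vectors. -/
def unitCube (ι : Type*) : Set (ι → ℝ) := {x | ∀ i, x i ∈ Ioc (0 : ℝ) 1}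

theorem unitCube_subset_Icc : unitCube ι ⊆ Icc 0 1 :=
  fun _ hx ↦ ⟨fun i ↦ (hx i).1.le, fun i ↦ (hx i).2⟩

theorem mem_preimage_sub_intVec_unitCube {w : ι → ℤ} {x : ι → ℝ} :
    x ∈ (· - intVec w) ⁻¹' unitCube ι ↔ ∀ i, x i ∈ Ioc (w i : ℝ) (w i + 1) := by
  simp [unitCube, intVec, add_comm]

theorem iUnion_preimage_sub_intVec_unitCube :
    ⋃ w : ι → ℤ, (· - intVec w) ⁻¹' unitCube ι = univ := by
  refine eq_univ_of_forall fun x ↦ mem_iUnion.2 ?_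
  have h : ∀ i, ∃ k : ℤ, x i ∈ Ioc (k : ℝ) (k + 1) := fun i ↦
    mem_iUnion.1 (iUnion_Ioc_intCast ℝ ▸ mem_univ (x i))
  choose w hw using h
  exact ⟨w, mem_preimage_sub_intVec_unitCube.2 hw⟩

theorem pairwise_disjoint_preimage_sub_intVec_unitCube :
    Pairwise (Disjoint on fun w : ι → ℤ ↦ (· - intVec w) ⁻¹' unitCube ι) := by
  intro v w hvw
  obtain ⟨i, hi⟩ := Function.ne_iff.1 hvw
  refine disjoint_left.2 fun x hv hw ↦ ?_
  exact disjoint_left.1 (pairwise_disjoint_Ioc_intCast ℝ hi)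
    (mem_preimage_sub_intVec_unitCube.1 hv i) (mem_preimage_sub_intVec_unitCube.1 hw i)

theorem measurableSet_unitCube [Finite ι] : MeasurableSet (unitCube ι) :=
  MeasurableSet.univ_pi' fun _ ↦ measurableSet_Ioc

theorem volume_unitCube [Fintype ι] : volume (unitCube ι) = 1 := by
  have h : unitCube ι = univ.pi fun _ ↦ Ioc (0 : ℝ) 1 := by ext; simp [unitCube]
  simp [h, volume_pi_pi]

theorem hasSum_setIntegral_unitCube_add_intVec [Fintype ι] {E : Type*}
    [NormedAddCommGroup E] [NormedSpace ℝ E] {f : (ι → ℝ) → E} (hf : Integrable f) :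
    HasSum (fun w : ι → ℤ ↦ ∫ x in unitCube ι, f (x + intVec w)) (∫ x, f x) := by
  have h := hasSum_integral_iUnion (μ := volume)
    (fun w : ι → ℤ ↦ measurableSet_unitCube.preimage (measurable_sub_const (intVec w)))
    pairwise_disjoint_preimage_sub_intVec_unitCube hf.integrableOn
  rw [iUnion_preimage_sub_intVec_unitCube, setIntegral_univ] at h
  convert! h using 2 with w
  simpa using ((measurePreserving_sub_right volume (intVec w)).setIntegral_preimage_emb
    (MeasurableEquiv.subRight (intVec w)).measurableEmbedding
    (fun x ↦ f (x + intVec w)) (unitCube ι)).symm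

/-- The projection of `ℝ^ι` onto its quotient by the integer vectors. -/
def toTorus (x : ι → ℝ) : UnitAddTorus ι := fun i ↦ (x i : UnitAddCircle)

theorem isQuotientMap_toTorus : IsQuotientMap (toTorus (ι := ι)) :=
  (IsOpenQuotientMap.piMap fun _ : ι ↦ QuotientAddGroup.isOpenQuotientMap_mk).isQuotientMap

theorem toTorus_add_intVec (x : ι → ℝ) (w : ι → ℤ) :
    toTorus (x + intVec w) = toTorus x := by
  ext i
  simp [toTorus, intVec]

theorem exists_eq_add_intVec_of_toTorus_eq {x y : ι → ℝ} (h : toTorus x = toTorus y) :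
    ∃ w, x = y + intVec w := by
  have hi : ∀ i, ∃ k : ℤ, k • (1 : ℝ) = x i - y i := fun i ↦
    AddCircle.coe_eq_zero_iff (1 : ℝ) |>.1 <| by
      simpa [toTorus, sub_eq_zero] using congr_fun h i
  choose w hw using hi
  exact ⟨w, funext fun i ↦ by
    rw [Pi.add_apply, intVec, ← sub_eq_iff_eq_add', ← hw i, zsmul_one]⟩

/-- The sum of the translates of `f` by all integer vectors. -/
noncomputable def periodization (f : C(ι → ℝ, ℂ)) : C(ι → ℝ, ℂ) :=
  ∑' w : ι → ℤ, f.comp (ContinuousMap.addRight (intVec w))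

/-- The translates of `f` by the integer vectors are summable uniformly on compact sets. -/
def SummableTranslates (f : C(ι → ℝ, ℂ)) : Prop :=
  ∀ s : TopologicalSpace.Compacts (ι → ℝ),
    Summable fun w : ι → ℤ ↦ ‖(f.comp (ContinuousMap.addRight (intVec w))).restrict s‖

variable {f : C(ι → ℝ, ℂ)}

theorem hasSum_periodization [Finite ι] (hf : SummableTranslates f) (x : ι → ℝ) :
    HasSum (fun w ↦ f (x + intVec w)) (periodization f x) :=
  ContinuousMap.hasSum_apply (ContinuousMap.summable_of_locally_summable_norm hf).hasSum x

theorem periodization_add_intVec [Finite ι] (hf : SummableTranslates f) (x : ι → ℝ) (w : ι → ℤ) :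
    periodization f (x + intVec w) = periodization f x := by
  rw [← (hasSum_periodization hf _).tsum_eq, ← (hasSum_periodization hf x).tsum_eq,
    ← (Equiv.addLeft w).tsum_eq fun v ↦ f (x + intVec v)]
  congr! 3 with v
  ext i
  simp [intVec, add_assoc]

theorem exists_comp_toTorus_eq_periodization [Finite ι] (hf : SummableTranslates f) :
    ∃ g : C(UnitAddTorus ι, ℂ), ∀ x, g (toTorus x) = periodization f x := by
  let proj : C(ι → ℝ, UnitAddTorus ι) := ⟨toTorus, isQuotientMap_toTorus.continuous⟩
  have hproj : IsQuotientMap proj := isQuotientMap_toTorus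
  have hconst : FactorsThrough (periodization f) proj := fun x y hxy ↦ by
    obtain ⟨w, rfl⟩ := exists_eq_add_intVec_of_toTorus_eq hxy
    exact periodization_add_intVec hf y w
  exact ⟨hproj.lift _ hconst, fun x ↦ DFunLike.congr_fun (hproj.lift_comp _ hconst) x⟩

variable [Fintype ι]

theorem norm_mFourier_toTorus_le (k : ι → ℤ) (x : ι → ℝ) :
    ‖mFourier k (toTorus x)‖ ≤ 1 :=
  ((mFourier k).norm_coe_le_norm _).trans_eq mFourier_norm

theorem integrable_mFourier_mul (hint : Integrable f) (k : ι → ℤ) :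
    Integrable fun x ↦ mFourier k (toTorus x) * f x :=
  hint.bdd_mul ((map_continuous _).comp isQuotientMap_toTorus.continuous).aestronglyMeasurable
    (.of_forall (norm_mFourier_toTorus_le k))

theorem norm_mFourier_mul_add_intVec_le (k w : ι → ℤ) {x : ι → ℝ} (hx : x ∈ unitCube ι) :
    ‖mFourier k (toTorus (x + intVec w)) * f (x + intVec w)‖ ≤
      ‖(f.comp (ContinuousMap.addRight (intVec w))).restrict (Icc (0 : ι → ℝ) 1)‖ := by
  rw [norm_mul]
  refine (mul_le_of_le_one_left (norm_nonneg _) (norm_mFourier_toTorus_le k _)).trans ?_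
  exact ((f.comp (ContinuousMap.addRight (intVec w))).restrict (Icc (0 : ι → ℝ) 1)).norm_coe_le_norm
    ⟨x, unitCube_subset_Icc hx⟩

theorem setIntegral_unitCube_mFourier_mul_periodization (hf : SummableTranslates f)
    (hint : Integrable f) (k : ι → ℤ) :
    ∫ x in unitCube ι, mFourier k (toTorus x) * periodization f x =
      ∫ x, mFourier k (toTorus x) * f x := by
  let term (w : ι → ℤ) (x : ι → ℝ) : ℂ :=
    mFourier k (toTorus (x + intVec w)) * f (x + intVec w)
  have hterm (x : ι → ℝ) :
      ∑' w, term w x = mFourier k (toTorus x) * periodization f x := by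
    simpa only [term, toTorus_add_intVec] using ((hasSum_periodization hf x).mul_left _).tsum_eq
  have hterm_int (w : ι → ℤ) : IntegrableOn (term w) (unitCube ι) :=
    ((integrable_mFourier_mul hint k).comp_add_right (intVec w)).integrableOn
  have hnorm : Summable fun w ↦ ∫ x in unitCube ι, ‖term w x‖ := by
    refine (hf ⟨Icc 0 1, isCompact_Icc⟩).of_nonneg_of_le
      (fun w ↦ integral_nonneg fun _ ↦ norm_nonneg _) fun w ↦ ?_
    refine (setIntegral_mono_on (hterm_int w).norm (integrableOn_const (by simp [volume_unitCube]))
      measurableSet_unitCube fun x hx ↦ norm_mFourier_mul_add_intVec_le k w hx).trans_eq ?_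
    simp [measureReal_def, volume_unitCube]
  simp only [← hterm]
  exact (hasSum_integral_of_summable_integral_norm hterm_int hnorm).unique
    (hasSum_setIntegral_unitCube_add_intVec (integrable_mFourier_mul hint k))

theorem tsum_intVec_eq_tsum_integral_mFourier (hf : SummableTranslates f) (hint : Integrable f)
    (hsum : Summable fun k : ι → ℤ ↦ ∫ x, mFourier (-k) (toTorus x) * f x) :
    ∑' w : ι → ℤ, f (intVec w) =
      ∑' k : ι → ℤ, ∫ x, mFourier (-k) (toTorus x) * f x := by
  obtain ⟨g, hg⟩ := exists_comp_toTorus_eq_periodization hf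
  have hcoeff (k : ι → ℤ) : mFourierCoeff g k =
      ∫ x, mFourier (-k) (toTorus x) * f x := by
    rw [← setIntegral_unitCube_mFourier_mul_periodization hf hint,
      mFourierCoeff_eq_integral g k 0]
    simp only [Pi.zero_apply, zero_add, smul_eq_mul, ← hg]
    rfl
  have hone (k : ι → ℤ) : mFourier k (toTorus 0) = 1 := by
    simp [mFourier, toTorus]
  have hseries := hasSum_mFourier_series_apply_of_summable
    (by simpa only [← hcoeff] using hsum) (toTorus 0)
  rw [hg] at hseries
  simpa only [zero_add, hcoeff, hone, smul_eq_mul, mul_one] using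
    (hasSum_periodization hf 0).tsum_eq.trans hseries.tsum_eq.symm

end Poisson

section Gaussian

variable [Fintype ι]

theorem dotProduct_self_nonneg (x : ι → ℝ) : 0 ≤ x ⬝ᵥ x := by
  simpa using dotProduct_star_self_nonneg x

theorem dotProduct_add_self_le (x y : ι → ℝ) :
    (x + y) ⬝ᵥ (x + y) ≤ 2 * (x ⬝ᵥ x) + 2 * (y ⬝ᵥ y) := by
  have h := dotProduct_self_nonneg (x - y)
  simp only [add_dotProduct, dotProduct_add, sub_dotProduct, dotProduct_sub, dotProduct_comm y x]
    at h ⊢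
  linarith

/-- The centred Gaussian `exp (-a ‖x‖²)`, for the Euclidean norm on `ι → ℝ`. -/
noncomputable def gaussian (a : ℝ) (x : ι → ℝ) : ℝ := exp (-a * (x ⬝ᵥ x))

theorem gaussian_pos (a : ℝ) (x : ι → ℝ) : 0 < gaussian a x := Real.exp_pos _

theorem gaussian_neg (a : ℝ) (x : ι → ℝ) : gaussian a (-x) = gaussian a x := by
  simp [gaussian]

theorem gaussian_smul (a t : ℝ) (x : ι → ℝ) : gaussian a (t • x) = gaussian (a * t ^ 2) x := by
  simp only [gaussian, smul_dotProduct, dotProduct_smul, smul_eq_mul]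
  ring_nf

theorem gaussian_antitone (x : ι → ℝ) : Antitone fun a ↦ gaussian a x := fun a b hab ↦
  Real.exp_le_exp.2 <| by gcongr; exact dotProduct_self_nonneg x

@[fun_prop]
theorem continuous_gaussian (a : ℝ) : Continuous (gaussian (ι := ι) a) := by
  unfold gaussian
  fun_prop

theorem gaussian_two_mul_mul_gaussian_two_mul_le {a : ℝ} (ha : 0 ≤ a) (x y : ι → ℝ) :
    gaussian (2 * a) x * gaussian (2 * a) y ≤ gaussian a (x + y) := by
  rw [gaussian, gaussian, gaussian, ← Real.exp_add, Real.exp_le_exp]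
  nlinarith [dotProduct_add_self_le x y]

theorem integrable_gaussian {a : ℝ} (ha : 0 < a) : Integrable (gaussian (ι := ι) a) := by
  have h := GaussianFourier.integrable_cexp_neg_mul_sum_add (ι := ι) (b := a) (by simpa) 0
  refine h.norm.congr (.of_forall fun x ↦ ?_)
  simp [gaussian, Complex.norm_exp, dotProduct, ← sq, ← Complex.ofReal_pow, ← Complex.ofReal_sum]

theorem mFourier_neg_toTorus (k : ι → ℤ) (x : ι → ℝ) :
    mFourier (-k) (toTorus x) =
      Complex.exp (-2 * π * Complex.I * (intVec k ⬝ᵥ x : ℝ)) := by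
  simp only [mFourier, toTorus, ContinuousMap.coe_mk, Pi.neg_apply, fourier_coe_apply,
    ← Complex.exp_sum, dotProduct, intVec, Complex.ofReal_sum, Finset.mul_sum]
  congr! 2 with i
  push_cast
  ring

theorem integral_cexp_mul_gaussian_pi (y : ι → ℝ) :
    ∫ x : ι → ℝ, Complex.exp (-2 * π * Complex.I * (y ⬝ᵥ x : ℝ)) * gaussian π x = gaussian π y := by
  have h := GaussianFourier.integral_cexp_neg_mul_sum_add (ι := ι) (b := π)
    (by simpa using Real.pi_pos) fun i ↦ -2 * π * Complex.I * y i
  rw [div_self (by simp [Real.pi_ne_zero]), Complex.one_cpow, one_mul] at h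
  convert h using 2
  · ext x
    simp only [gaussian, dotProduct, Complex.ofReal_exp, ← Complex.exp_add]
    push_cast
    simp only [Finset.mul_sum, ← sq, mul_assoc]
    ring_nf
  · simp only [gaussian, dotProduct, Complex.ofReal_exp]
    push_cast
    simp only [mul_pow, Complex.I_sq, ← Finset.mul_sum, ← sq]
    field_simp
    ring_nf

end Gaussian

section Theta

variable [Fintype ι] [DecidableEq ι] {G : Matrix ι ι ℝ}

theorem isUnit_det_dual (hG : IsUnit G.det) : IsUnit (G⁻¹)ᵀ.det := by
  rw [det_transpose]
  exact isUnit_nonsing_inv_det G hG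

theorem isUnit_det_smul (hG : IsUnit G.det) {c : ℝ} (hc : c ≠ 0) : IsUnit (c • G).det := by
  rw [det_smul]
  exact (hc.isUnit.pow _).mul hG

theorem dual_smul (hG : IsUnit G.det) {c : ℝ} (hc : c ≠ 0) :
    ((c • G)⁻¹)ᵀ = c⁻¹ • (G⁻¹)ᵀ := by
  rw [inv_eq_right_inv (B := c⁻¹ • G⁻¹) (by simp [smul_smul, hc, mul_nonsing_inv G hG]),
    transpose_smul]

theorem measurableEmbedding_mulVec (hG : IsUnit G.det) : MeasurableEmbedding (G *ᵥ ·) :=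
  Continuous.measurableEmbedding (by fun_prop)
    (mulVec_injective_iff_isUnit.2 ((isUnit_iff_isUnit_det G).2 hG))

theorem map_mulVec_volume (hG : IsUnit G.det) :
    Measure.map (G *ᵥ ·) (volume : Measure (ι → ℝ)) = ENNReal.ofReal |G.det|⁻¹ • volume := by
  simpa [abs_inv] using! Real.map_matrix_volume_pi_eq_smul_volume_pi hG.ne_zero

theorem integrable_comp_mulVec (hG : IsUnit G.det) {E : Type*} [NormedAddCommGroup E]
    {f : (ι → ℝ) → E} (hf : Integrable f) : Integrable fun x ↦ f (G *ᵥ x) := by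
  rw [← comp_def, ← (measurableEmbedding_mulVec hG).integrable_map_iff, map_mulVec_volume hG]
  exact hf.smul_measure ENNReal.ofReal_ne_top

theorem integral_comp_mulVec (hG : IsUnit G.det) {E : Type*} [NormedAddCommGroup E]
    [NormedSpace ℝ E] (f : (ι → ℝ) → E) : ∫ x, f (G *ᵥ x) = |G.det|⁻¹ • ∫ x, f x := by
  rw [← (measurableEmbedding_mulVec hG).integral_map, map_mulVec_volume hG, integral_smul_measure,
    ENNReal.toReal_ofReal (by positivity)]

-- As `‖x + y‖² ≤ 2 ‖x‖² + 2 ‖y‖²`, the term at `w` is at most a constant multiple of the integral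
-- of a wider Gaussian over the unit cube at `w`.
theorem summable_gaussian (hG : IsUnit G.det) {a : ℝ} (ha : 0 < a) :
    Summable fun w ↦ gaussian a (G *ᵥ intVec w) := by
  have hint {b : ℝ} (hb : 0 < b) : Integrable fun x ↦ gaussian b (G *ᵥ x) :=
    integrable_comp_mulVec hG (integrable_gaussian hb)
  have : NeZero (volume.restrict (unitCube ι)) :=
    ⟨by simp [Measure.restrict_eq_zero, volume_unitCube]⟩
  have hpos : 0 < ∫ x in unitCube ι, gaussian a (G *ᵥ x) := integral_exp_pos (hint ha).integrableOn
  refine (summable_mul_left_iff hpos.ne').1 ?_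
  refine (hasSum_setIntegral_unitCube_add_intVec (hint (half_pos ha))).summable.of_nonneg_of_le
    (fun w ↦ mul_nonneg hpos.le (gaussian_pos _ _).le) fun w ↦ ?_
  rw [← integral_mul_const]
  refine setIntegral_mono ((hint ha).integrableOn.mul_const _)
    ((hint (half_pos ha)).comp_add_right (intVec w)).integrableOn fun x ↦ ?_
  simpa [mulVec_add, mul_div_cancel₀] using
    gaussian_two_mul_mul_gaussian_two_mul_le (half_pos ha).le (G *ᵥ x) (G *ᵥ intVec w)

theorem summableTranslates_gaussian_pi (hG : IsUnit G.det) :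
    SummableTranslates ⟨fun x ↦ (gaussian π (G *ᵥ x) : ℂ), by fun_prop⟩ := by
  intro s
  obtain ⟨B, hB⟩ := s.isCompact.bddAbove_image (f := fun x ↦ (gaussian π (G *ᵥ x))⁻¹)
    (by fun_prop (disch := intros; exact (gaussian_pos _ _).ne'))
  have hle (w : ι → ℤ) {x : ι → ℝ} (hx : x ∈ s) :
      gaussian π (G *ᵥ (x + intVec w)) ≤ B * gaussian (π / 2) (G *ᵥ intVec w) := by
    have h := gaussian_two_mul_mul_gaussian_two_mul_le (by positivity : 0 ≤ π / 2)
      (-(G *ᵥ x)) (G *ᵥ (x + intVec w))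
    rw [mul_div_cancel₀ _ two_ne_zero, gaussian_neg, mulVec_add, neg_add_cancel_left,
      ← mulVec_add, ← le_inv_mul_iff₀ (gaussian_pos _ _)] at h
    exact h.trans (mul_le_mul_of_nonneg_right (hB (mem_image_of_mem _ hx)) (gaussian_pos _ _).le)
  refine ((summable_gaussian hG (half_pos Real.pi_pos)).mul_left |B|).of_nonneg_of_le
    (fun w ↦ norm_nonneg _) fun w ↦ ?_
  refine (ContinuousMap.norm_le _ (mul_nonneg (abs_nonneg B) (gaussian_pos _ _).le)).2 fun x ↦ ?_
  rw [ContinuousMap.restrict_apply, ContinuousMap.comp_apply, ContinuousMap.coe_addRight,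
    ContinuousMap.coe_mk, Complex.norm_of_nonneg (gaussian_pos _ _).le]
  exact (hle w x.2).trans (mul_le_mul_of_nonneg_right (le_abs_self B) (gaussian_pos _ _).le)

theorem integral_mFourier_mul_gaussian_pi (hG : IsUnit G.det) (k : ι → ℤ) :
    ∫ x, mFourier (-k) (toTorus x) * (gaussian π (G *ᵥ x) : ℂ) =
      (|G.det|⁻¹ * gaussian π ((G⁻¹)ᵀ *ᵥ intVec k) : ℝ) := by
  have hk (x : ι → ℝ) : intVec k ⬝ᵥ x = (G⁻¹)ᵀ *ᵥ intVec k ⬝ᵥ G *ᵥ x := by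
    rw [mulVec_transpose, ← dotProduct_mulVec, mulVec_mulVec, nonsing_inv_mul G hG, one_mulVec]
  simp only [mFourier_neg_toTorus, hk]
  rw [integral_comp_mulVec hG fun x ↦ Complex.exp (-2 * π * Complex.I *
    ((G⁻¹)ᵀ *ᵥ intVec k ⬝ᵥ x : ℝ)) * (gaussian π x : ℂ), integral_cexp_mul_gaussian_pi]
  simp

/-- The theta constant `∑ exp (-π ‖x‖²)` of the lattice generated by `G`. -/
noncomputable def theta (G : Matrix ι ι ℝ) : ℝ := ∑' w, gaussian π (G *ᵥ intVec w)

theorem theta_pos (hG : IsUnit G.det) : 0 < theta G :=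
  (summable_gaussian hG Real.pi_pos).tsum_pos (fun _ ↦ (gaussian_pos _ _).le) 0 (gaussian_pos _ _)

theorem theta_eq_inv_det_mul_theta_dual (hG : IsUnit G.det) :
    theta G = |G.det|⁻¹ * theta (G⁻¹)ᵀ := by
  have h := tsum_intVec_eq_tsum_integral_mFourier (summableTranslates_gaussian_pi hG)
    (integrable_comp_mulVec hG (integrable_gaussian Real.pi_pos)).ofReal
    (by simpa [integral_mFourier_mul_gaussian_pi hG] using
      (Complex.summable_ofReal.2 (summable_gaussian (isUnit_det_dual hG) Real.pi_pos)).mul_left _)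
  simp only [ContinuousMap.coe_mk, integral_mFourier_mul_gaussian_pi hG, ← Complex.ofReal_tsum] at h
  rw [theta, theta, ← tsum_mul_left]
  exact Complex.ofReal_injective h

theorem theta_smul_le_theta (hG : IsUnit G.det) {c : ℝ} (hc : 1 ≤ c) : theta (c • G) ≤ theta G := by
  refine (summable_gaussian (isUnit_det_smul hG (one_pos.trans_le hc).ne') Real.pi_pos).tsum_le_tsum
    (fun w ↦ ?_) (summable_gaussian hG Real.pi_pos)
  rw [smul_mulVec, gaussian_smul]
  exact gaussian_antitone _ (le_mul_of_one_le_right Real.pi_pos.le (one_le_pow₀ hc))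

theorem theta_smul_le (hG : IsUnit G.det) {t : ℝ} (ht0 : 0 < t) (ht1 : t ≤ 1) :
    theta (t • G) ≤ (t ^ Fintype.card ι)⁻¹ * theta G := by
  rw [theta_eq_inv_det_mul_theta_dual (isUnit_det_smul hG ht0.ne'), dual_smul hG ht0.ne', det_smul,
    abs_mul, abs_of_pos (pow_pos ht0 _), mul_inv, mul_assoc, theta_eq_inv_det_mul_theta_dual hG]
  gcongr
  exact theta_smul_le_theta (isUnit_det_dual hG) ((one_le_inv₀ ht0).2 ht1)

end Theta

section Stretch

variable [DecidableEq ι] {u : ι → ℝ}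

/-- The linear map scaling the line `ℝ u` by `α` and fixing its orthogonal complement, for a unit
vector `u`. -/
def stretch (u : ι → ℝ) (α : ℝ) : Matrix ι ι ℝ := 1 + (α - 1) • vecMulVec u u

@[simp]
theorem stretch_one : stretch u 1 = 1 := by simp [stretch]

@[simp]
theorem transpose_stretch (α : ℝ) : (stretch u α)ᵀ = stretch u α := by
  rw [stretch, transpose_add, transpose_one, transpose_smul, transpose_vecMulVec]

variable [Fintype ι]

theorem stretch_mulVec (α : ℝ) (x : ι → ℝ) :
    stretch u α *ᵥ x = x + ((α - 1) * (u ⬝ᵥ x)) • u := by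
  simp [stretch, add_mulVec, smul_mulVec, vecMulVec_mulVec, smul_smul]

theorem stretch_mul_stretch (hu : u ⬝ᵥ u = 1) (α β : ℝ) :
    stretch u α * stretch u β = stretch u (α * β) := by
  simp only [stretch, add_mul, mul_add, one_mul, mul_one, smul_mul_smul_comm,
    vecMulVec_mul_vecMulVec, hu, one_smul, add_assoc, ← add_smul]
  congr 2
  ring

theorem inv_stretch (hu : u ⬝ᵥ u = 1) {α : ℝ} (hα : α ≠ 0) :
    (stretch u α)⁻¹ = stretch u α⁻¹ :=
  inv_eq_right_inv (by rw [stretch_mul_stretch hu, mul_inv_cancel₀ hα, stretch_one])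

theorem det_stretch (hu : u ⬝ᵥ u = 1) (α : ℝ) : (stretch u α).det = α := by
  have h := det_one_add_replicateCol_mul_replicateRow (ι := Unit) ((α - 1) • u) u
  rw [← vecMulVec_eq, smul_vecMulVec, dotProduct_smul, hu] at h
  rw [stretch, h, smul_eq_mul]
  ring

theorem stretch_mulVec_dotProduct_self (hu : u ⬝ᵥ u = 1) (α : ℝ) (x : ι → ℝ) :
    stretch u α *ᵥ x ⬝ᵥ stretch u α *ᵥ x = x ⬝ᵥ x + (α ^ 2 - 1) * (u ⬝ᵥ x) ^ 2 := by
  simp only [stretch_mulVec, add_dotProduct, dotProduct_add, smul_dotProduct, dotProduct_smul, hu,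
    dotProduct_comm x u, smul_eq_mul]
  ring

theorem gaussian_stretch_mulVec (hu : u ⬝ᵥ u = 1) (a α : ℝ) (x : ι → ℝ) :
    gaussian a (stretch u α *ᵥ x) = exp (-a * ((α ^ 2 - 1) * (u ⬝ᵥ x) ^ 2)) * gaussian a x := by
  rw [gaussian, gaussian, stretch_mulVec_dotProduct_self hu, ← Real.exp_add]
  ring_nf

end Stretch

section SecondMoment

variable [Fintype ι] {u : ι → ℝ}

theorem sq_dotProduct_le_dotProduct_self (hu : u ⬝ᵥ u = 1) (x : ι → ℝ) :
    (u ⬝ᵥ x) ^ 2 ≤ x ⬝ᵥ x := by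
  have h := Finset.sum_mul_sq_le_sq_mul_sq Finset.univ u x
  simp only [sq (u _), sq (x _)] at h
  exact h.trans_eq ((congrArg (· * (x ⬝ᵥ x)) hu).trans (one_mul _))

theorem dotProduct_self_mul_gaussian_le (x : ι → ℝ) :
    π * (x ⬝ᵥ x) * gaussian (π / 2) x ≤ 4 * gaussian (π / 4) x := by
  have h : π / 4 * (x ⬝ᵥ x) ≤ exp (π / 4 * (x ⬝ᵥ x)) := by
    linarith [Real.add_one_le_exp (π / 4 * (x ⬝ᵥ x))]
  calc π * (x ⬝ᵥ x) * gaussian (π / 2) x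
      = 4 * (π / 4 * (x ⬝ᵥ x)) * gaussian (π / 2) x := by ring
    _ ≤ 4 * exp (π / 4 * (x ⬝ᵥ x)) * gaussian (π / 2) x := by
        gcongr
        exact (gaussian_pos _ _).le
    _ = 4 * gaussian (π / 4) x := by
        rw [gaussian, gaussian, mul_assoc, ← Real.exp_add]
        ring_nf

theorem sq_dotProduct_mul_exp_mul_gaussian_le (hu : u ⬝ᵥ u = 1) {s : ℝ} (hs : -(1 / 2) ≤ s)
    (x : ι → ℝ) :
    π * (u ⬝ᵥ x) ^ 2 * (exp (-π * (s * (u ⬝ᵥ x) ^ 2)) * gaussian π x) ≤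
      4 * gaussian (π / 4) x := by
  have hux := sq_dotProduct_le_dotProduct_self hu x
  refine le_trans ?_ (dotProduct_self_mul_gaussian_le x)
  rw [gaussian, gaussian, ← Real.exp_add]
  gcongr
  · exact mul_nonneg Real.pi_pos.le (dotProduct_self_nonneg x)
  · nlinarith [Real.pi_pos, mul_nonneg (by linarith : 0 ≤ s + 1 / 2) (sq_nonneg (u ⬝ᵥ x)),
      mul_le_mul_of_nonneg_left hux Real.pi_pos.le]

variable [DecidableEq ι] {G : Matrix ι ι ℝ}

/-- The second moment in direction `u` of the discrete Gaussian on the lattice generated by `G`,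
which gives the lattice point `x` a probability proportional to `exp (-π ‖x‖²)`. -/
noncomputable def secondMoment (G : Matrix ι ι ℝ) (u : ι → ℝ) : ℝ :=
  (∑' w, (u ⬝ᵥ G *ᵥ intVec w) ^ 2 * gaussian π (G *ᵥ intVec w)) / theta G

theorem hasDerivAt_tsum_exp_mul_gaussian (hG : IsUnit G.det) (hu : u ⬝ᵥ u = 1) :
    HasDerivAt (fun s ↦ ∑' w, exp (-π * (s * (u ⬝ᵥ G *ᵥ intVec w) ^ 2)) *
        gaussian π (G *ᵥ intVec w))
      (-π * ∑' w, (u ⬝ᵥ G *ᵥ intVec w) ^ 2 * gaussian π (G *ᵥ intVec w)) 0 := by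
  have hterm (p c s : ℝ) : HasDerivAt (fun s ↦ exp (-π * (s * p)) * c)
      (-(π * p * (exp (-π * (s * p)) * c))) s := by
    refine (((hasDerivAt_id s).mul_const p).const_mul (-π)).exp.mul_const c |>.congr_deriv ?_
    simp only [id]
    ring
  have h0 : (0 : ℝ) ∈ Ioo (-(1 / 2) : ℝ) 1 := by norm_num
  have h := hasDerivAt_tsum_of_isPreconnected (𝕜 := ℝ) (t := Ioo (-(1 / 2)) 1)
    ((summable_gaussian hG (by positivity : 0 < π / 4)).mul_left 4) isOpen_Ioo isPreconnected_Ioo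
    (fun w s _ ↦ hterm ((u ⬝ᵥ G *ᵥ intVec w) ^ 2) (gaussian π (G *ᵥ intVec w)) s)
    (fun w s hs ↦ by
      rw [norm_neg, Real.norm_of_nonneg (mul_nonneg (by positivity)
        (mul_nonneg (Real.exp_pos _).le (gaussian_pos _ _).le))]
      exact sq_dotProduct_mul_exp_mul_gaussian_le hu hs.1.le _)
    h0 (by simpa using summable_gaussian hG Real.pi_pos) h0
  simpa [← tsum_mul_left, tsum_neg, mul_assoc] using h

theorem hasDerivAt_theta_stretch_mul (hG : IsUnit G.det) (hu : u ⬝ᵥ u = 1) :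
    HasDerivAt (fun α ↦ theta (stretch u α * G)) (-(2 * π) * (secondMoment G u * theta G)) 1 := by
  have hsq : HasDerivAt (fun α : ℝ ↦ α ^ 2 - 1) 2 1 := by
    simpa using (hasDerivAt_pow 2 (1 : ℝ)).sub_const 1
  have h := hasDerivAt_tsum_exp_mul_gaussian hG hu
  refine (h.comp_of_eq (1 : ℝ) hsq (by norm_num)).congr_deriv ?_ |>.congr_of_eventuallyEq
    (.of_forall fun α ↦ ?_)
  · rw [secondMoment, div_mul_cancel₀ _ (theta_pos hG).ne']
    ring
  · simp only [theta, ← mulVec_mulVec, gaussian_stretch_mulVec hu, Function.comp_apply]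

theorem theta_stretch_mul (hG : IsUnit G.det) (hu : u ⬝ᵥ u = 1) {α : ℝ} (hα : 0 < α) :
    theta (stretch u α * G) = |G.det|⁻¹ * (α⁻¹ * theta (stretch u α⁻¹ * (G⁻¹)ᵀ)) := by
  have hunit : IsUnit (stretch u α * G).det := by
    rw [det_mul, det_stretch hu]
    exact hα.ne'.isUnit.mul hG
  rw [theta_eq_inv_det_mul_theta_dual hunit, det_mul, det_stretch hu, abs_mul, abs_of_pos hα,
    Matrix.mul_inv_rev, inv_stretch hu hα.ne', transpose_mul, transpose_stretch, mul_inv]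
  ring

theorem secondMoment_add_secondMoment_dual (hG : IsUnit G.det) (hu : u ⬝ᵥ u = 1) :
    secondMoment G u + secondMoment (G⁻¹)ᵀ u = (2 * π)⁻¹ := by
  -- Both sides of `theta_stretch_mul` are differentiated at `α = 1`.
  have hinv := hasDerivAt_inv (one_ne_zero (α := ℝ))
  have hdual := hasDerivAt_theta_stretch_mul (isUnit_det_dual hG) hu
  rw [← inv_one (G := ℝ)] at hdual
  have hright := ((hinv.mul (hdual.comp 1 hinv)).const_mul |G.det|⁻¹).congr_of_eventuallyEq
    ((eventually_gt_nhds one_pos).mono fun α hα ↦ theta_stretch_mul hG hu hα)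
  have h := (hasDerivAt_theta_stretch_mul hG hu).unique hright
  simp only [Function.comp_apply, inv_one, stretch_one, one_mul, one_pow] at h
  have hlin : -(2 * π) * (secondMoment G u * theta G) =
      -theta G + 2 * π * (secondMoment (G⁻¹)ᵀ u * theta G) :=
    h.trans (by rw [theta_eq_inv_det_mul_theta_dual hG]; ring)
  refine eq_inv_of_mul_eq_one_left (mul_right_cancel₀ (theta_pos hG).ne' ?_)
  linear_combination -hlin

end SecondMoment

section LongOff

variable {R S : ℝ}

theorem nonneg_of_one_le_mul {a : ℝ} (ha : 0 < a) (haR : 1 ≤ a * R) : 0 ≤ R :=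
  (pos_of_mul_pos_right (one_pos.trans_le haR) ha.le).le

theorem pi_mul_one_sub_sq_pos {t : ℝ} (ht0 : 0 < t) (ht1 : t < 1) : 0 < π * (1 - t ^ 2) :=
  mul_pos Real.pi_pos (sub_pos.2 (pow_lt_one₀ ht0.le ht1 two_ne_zero))

theorem mul_exp_neg_mul_le {a q : ℝ} (ha : 0 < a) (haR : 1 ≤ a * R) (hq : R ≤ q) :
    q * exp (-a * q) ≤ R * exp (-a * R) := by
  have hR := nonneg_of_one_le_mul ha haR
  have hqR : q ≤ R * exp (a * (q - R)) := by
    nlinarith [mul_le_mul_of_nonneg_left (Real.add_one_le_exp (a * (q - R))) hR,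
      mul_nonneg (sub_nonneg.2 haR) (sub_nonneg.2 hq)]
  calc q * exp (-a * q) ≤ R * exp (a * (q - R)) * exp (-a * q) := by gcongr
    _ = R * exp (-a * R) := by
      rw [mul_assoc, ← Real.exp_add]
      ring_nf

theorem natCast_mul_pow_le_two_mul_sq {n : ℕ} (hn : 2 ≤ n) {r : ℝ} (hr0 : 0 ≤ r) (hr : r ≤ 1 / 2) :
    n * r ^ n ≤ 2 * r ^ 2 := by
  induction n, hn using Nat.le_induction with
  | base => simp
  | succ n hn ih =>
    have hn' : (2 : ℝ) ≤ n := mod_cast hn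
    calc ((n + 1 : ℕ) : ℝ) * r ^ (n + 1) = ((n + 1) * r) * r ^ n := by push_cast; ring
      _ ≤ n * r ^ n := by gcongr; nlinarith
      _ ≤ 2 * r ^ 2 := ih

-- The constant is tight: in dimension two the tail estimate needs `4 π · 2 · (2 / 10.1)² < 1`.
theorem exp_neg_three_mul_pi_div_four_lt : exp (-(3 * π / 4)) < 1 / 10.1 := by
  have hquad := Real.quadratic_le_exp_of_nonneg (by norm_num : (0 : ℝ) ≤ 0.35)
  have he : (2.7182818283 : ℝ) ^ 2 ≤ exp 1 ^ 2 := by gcongr; exact Real.exp_one_gt_d9.le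
  have h : (10.1 : ℝ) < exp (3 * π / 4) := calc
    (10.1 : ℝ) < 2.7182818283 ^ 2 * (1 + 0.35 + 0.35 ^ 2 / 2) := by norm_num
    _ ≤ exp 1 ^ 2 * exp 0.35 := by gcongr
    _ = exp 2.35 := by rw [← Real.exp_nat_mul, ← Real.exp_add]; norm_num
    _ ≤ exp (3 * π / 4) := Real.exp_le_exp.2 (by linarith [Real.pi_gt_d2])
  rw [Real.exp_neg, inv_eq_one_div]
  exact one_div_lt_one_div_of_lt (by norm_num) h

theorem natCast_mul_exp_mul_inv_pow_lt {n : ℕ} (hn : 2 ≤ n) :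
    n * exp (-(π * (1 - (1 / 2) ^ 2)) * n) * ((1 / 2) ^ n)⁻¹ < (4 * π)⁻¹ := by
  have hlt := exp_neg_three_mul_pi_div_four_lt
  have hpos := Real.exp_pos (-(3 * π / 4))
  have hpow : exp (-(π * (1 - (1 / 2) ^ 2)) * n) * ((1 / 2) ^ n)⁻¹ =
      (2 * exp (-(3 * π / 4))) ^ n := by
    rw [mul_pow, ← Real.exp_nat_mul, ← inv_pow, mul_comm]
    ring_nf
  have hle := natCast_mul_pow_le_two_mul_sq hn (by positivity)
    (by linarith : 2 * exp (-(3 * π / 4)) ≤ 1 / 2)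
  rw [inv_eq_one_div (4 * π), lt_div_iff₀' (by positivity), mul_assoc (n : ℝ), hpow]
  nlinarith [Real.pi_lt_d2, Real.pi_pos]

variable [Fintype ι] {G : Matrix ι ι ℝ} {u : ι → ℝ}

-- Splitting `exp (-π q) = exp (-π (1 - t²) q) * exp (-π t² q)` leaves a Gaussian to be summed.
theorem sq_dotProduct_mul_gaussian_le (hu : u ⬝ᵥ u = 1) {t : ℝ} (ht0 : 0 < t) (ht1 : t < 1)
    (htR : 1 ≤ π * (1 - t ^ 2) * R) {x : ι → ℝ} (hx : u ⬝ᵥ x ≠ 0 → R ≤ x ⬝ᵥ x) :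
    (u ⬝ᵥ x) ^ 2 * gaussian π x ≤ R * exp (-(π * (1 - t ^ 2)) * R) * gaussian π (t • x) := by
  have ha := pi_mul_one_sub_sq_pos ht0 ht1
  have hR := nonneg_of_one_le_mul ha htR
  rcases eq_or_ne (u ⬝ᵥ x) 0 with hux | hux
  · rw [hux]
    simpa using mul_nonneg (mul_nonneg hR (Real.exp_pos _).le) (gaussian_pos _ _).le
  calc (u ⬝ᵥ x) ^ 2 * gaussian π x ≤ x ⬝ᵥ x * gaussian π x :=
        mul_le_mul_of_nonneg_right (sq_dotProduct_le_dotProduct_self hu x) (gaussian_pos _ _).le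
    _ = x ⬝ᵥ x * exp (-(π * (1 - t ^ 2)) * (x ⬝ᵥ x)) * gaussian π (t • x) := by
        rw [gaussian_smul, gaussian, gaussian, mul_assoc, ← Real.exp_add]
        ring_nf
    _ ≤ R * exp (-(π * (1 - t ^ 2)) * R) * gaussian π (t • x) :=
        mul_le_mul_of_nonneg_right (mul_exp_neg_mul_le ha htR (hx hux)) (gaussian_pos _ _).le

/-- The points of the lattice generated by `G` that do not lie on the hyperplane orthogonal to `u`
have squared Euclidean norm at least `R`. -/
def LongOff (G : Matrix ι ι ℝ) (u : ι → ℝ) (R : ℝ) : Prop :=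
  ∀ w, u ⬝ᵥ G *ᵥ intVec w ≠ 0 → R ≤ G *ᵥ intVec w ⬝ᵥ G *ᵥ intVec w

theorem LongOff.mono (h : LongOff G u R) (hSR : S ≤ R) : LongOff G u S :=
  fun w hw ↦ hSR.trans (h w hw)

theorem LongOff.smul (h : LongOff G u R) (c : ℝ) : LongOff (c • G) u (c ^ 2 * R) := by
  intro w hw
  rw [smul_mulVec, dotProduct_smul, smul_eq_mul] at hw
  rw [smul_mulVec, smul_dotProduct, dotProduct_smul, smul_smul, smul_eq_mul, ← sq]
  exact mul_le_mul_of_nonneg_left (h w (right_ne_zero_of_mul hw)) (sq_nonneg c)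

variable [DecidableEq ι]

theorem LongOff.secondMoment_le (h : LongOff G u R) (hG : IsUnit G.det) (hu : u ⬝ᵥ u = 1) {t : ℝ}
    (ht0 : 0 < t) (ht1 : t < 1) (htR : 1 ≤ π * (1 - t ^ 2) * R) :
    secondMoment G u ≤ R * exp (-(π * (1 - t ^ 2)) * R) * (t ^ Fintype.card ι)⁻¹ := by
  have hterm (w : ι → ℤ) : (u ⬝ᵥ G *ᵥ intVec w) ^ 2 * gaussian π (G *ᵥ intVec w) ≤
      R * exp (-(π * (1 - t ^ 2)) * R) * gaussian π ((t • G) *ᵥ intVec w) := by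
    rw [smul_mulVec]
    exact sq_dotProduct_mul_gaussian_le hu ht0 ht1 htR (h w)
  have hsum := (summable_gaussian (isUnit_det_smul hG ht0.ne') Real.pi_pos).mul_left
    (R * exp (-(π * (1 - t ^ 2)) * R))
  have hsum' := hsum.of_nonneg_of_le
    (fun w ↦ mul_nonneg (sq_nonneg (u ⬝ᵥ G *ᵥ intVec w)) (gaussian_pos _ _).le) hterm
  rw [secondMoment, div_le_iff₀ (theta_pos hG), mul_assoc]
  refine (hsum'.tsum_le_tsum hterm hsum).trans ?_
  rw [tsum_mul_left]
  have ha := pi_mul_one_sub_sq_pos ht0 ht1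
  have hR := nonneg_of_one_le_mul ha htR
  exact mul_le_mul_of_nonneg_left (theta_smul_le hG ht0 ht1.le) (by positivity)

theorem LongOff.secondMoment_lt (h : LongOff G u (Fintype.card ι)) (hG : IsUnit G.det)
    (hu : u ⬝ᵥ u = 1) (hι : 2 ≤ Fintype.card ι) : secondMoment G u < (4 * π)⁻¹ := by
  have hι' : (2 : ℝ) ≤ Fintype.card ι := mod_cast hι
  have htR : 1 ≤ π * (1 - (1 / 2) ^ 2) * Fintype.card ι := by nlinarith [Real.pi_gt_three]
  exact (h.secondMoment_le hG hu (by norm_num) (by norm_num) htR).trans_lt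
    (natCast_mul_exp_mul_inv_pow_lt hι)

theorem LongOff.card_lt_two (h : LongOff G u (Fintype.card ι))
    (h' : LongOff (G⁻¹)ᵀ u (Fintype.card ι)) (hG : IsUnit G.det) (hu : u ⬝ᵥ u = 1) :
    Fintype.card ι < 2 := by
  by_contra! hι
  have hlt : secondMoment G u + secondMoment (G⁻¹)ᵀ u < (4 * π)⁻¹ + (4 * π)⁻¹ :=
    add_lt_add (h.secondMoment_lt hG hu hι) (h'.secondMoment_lt (isUnit_det_dual hG) hu hι)
  rw [secondMoment_add_secondMoment_dual hG hu] at hlt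
  exact hlt.ne (by field_simp; norm_num)

theorem LongOff.le_det_sq [Unique ι] (h : LongOff G u R) (hG : IsUnit G.det) (hu : u ⬝ᵥ u = 1) :
    R ≤ G.det ^ 2 := by
  have hu0 : u default ≠ 0 := by
    rintro h0
    simp [dotProduct, h0] at hu
  have hG0 : G default default ≠ 0 := by simpa using hG.ne_zero
  simpa [intVec, dotProduct, mulVec, hu0, hG0, sq] using h 1

theorem LongOff.mul_le_one [Unique ι] (h : LongOff G u R) (h' : LongOff (G⁻¹)ᵀ u S) (hR : 0 ≤ R)
    (hG : IsUnit G.det) (hu : u ⬝ᵥ u = 1) : R * S ≤ 1 := by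
  calc R * S ≤ R * (G⁻¹)ᵀ.det ^ 2 :=
        mul_le_mul_of_nonneg_left (h'.le_det_sq (isUnit_det_dual hG) hu) hR
    _ ≤ G.det ^ 2 * (G⁻¹)ᵀ.det ^ 2 :=
        mul_le_mul_of_nonneg_right (h.le_det_sq hG hu) (sq_nonneg _)
    _ = 1 := by rw [← mul_pow, det_transpose, ← det_mul, mul_nonsing_inv G hG, det_one, one_pow]

theorem LongOff.mul_le_card_sq (h : LongOff G u R) (h' : LongOff (G⁻¹)ᵀ u S) (hR : 0 ≤ R)
    (hG : IsUnit G.det) (hu : u ⬝ᵥ u = 1) : R * S ≤ Fintype.card ι ^ 2 := by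
  have : Nonempty ι := not_isEmpty_iff.1 fun _ ↦ by simp at hu
  have hn : (0 : ℝ) < Fintype.card ι := by positivity
  rcases (Nat.succ_le_of_lt (Fintype.card_pos (α := ι))).eq_or_lt' with hone | htwo
  · obtain ⟨_⟩ := Fintype.card_eq_one_iff_nonempty_unique.1 hone
    simpa using h.mul_le_one h' hR hG hu
  by_contra! hRS
  have hR' : 0 < R := hR.lt_of_ne' (by rintro rfl; nlinarith)
  have hc : √(Fintype.card ι / R) ≠ 0 := by positivity
  have hcsq : √(Fintype.card ι / R) ^ 2 = Fintype.card ι / R := Real.sq_sqrt (by positivity)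
  have hlong : LongOff (√(Fintype.card ι / R) • G) u (Fintype.card ι) :=
    (h.smul _).mono (by rw [hcsq, div_mul_cancel₀ _ hR'.ne'])
  have hlong' : LongOff ((√(Fintype.card ι / R) • G)⁻¹)ᵀ u (Fintype.card ι) := by
    rw [dual_smul hG hc]
    refine (h'.smul _).mono ?_
    rw [inv_pow, hcsq, inv_div, div_mul_eq_mul_div, le_div_iff₀ hn]
    linarith
  exact (hlong.card_lt_two hlong' (isUnit_det_smul hG hc) hu).not_ge htwo

end LongOff

section SuccMin

theorem exists_unit_orthogonal [Fintype ι] {V : Submodule ℝ (ι → ℝ)} (hV : V < ⊤) :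
    ∃ u : ι → ℝ, u ⬝ᵥ u = 1 ∧ ∀ x ∈ V, u ⬝ᵥ x = 0 := by
  classical
  obtain ⟨φ, hφ, hker⟩ := V.exists_le_ker_of_lt_top hV
  obtain ⟨v, rfl⟩ := (dotProductEquiv ℝ ι).surjective φ
  have hv : 0 < v ⬝ᵥ v := (dotProduct_self_nonneg v).lt_of_ne' (by simpa using hφ)
  refine ⟨(√(v ⬝ᵥ v))⁻¹ • v, ?_, fun x hx ↦ ?_⟩
  · rw [smul_dotProduct, dotProduct_smul, smul_smul, smul_eq_mul, ← sq, inv_pow,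
      Real.sq_sqrt hv.le, inv_mul_cancel₀ hv.ne']
  · have hvx : v ⬝ᵥ x = 0 := hker hx
    rw [smul_dotProduct, hvx, smul_zero]

theorem euclNorm_eq_sqrt {n : ℕ} (x : Fin n → ℝ) : euclNorm x = √(x ⬝ᵥ x) := by
  simp only [euclNorm, dotProduct, sq]

theorem euclNorm_pos {n : ℕ} {x : Fin n → ℝ} (hx : x ≠ 0) : 0 < euclNorm x := by
  rw [euclNorm_eq_sqrt, Real.sqrt_pos]
  exact (dotProduct_self_nonneg x).lt_of_ne' (by simpa using hx)

variable {K : ℕ} {F : Matrix (Fin K) (Fin K) ℝ} {m : ℕ}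

theorem succMin_nonneg : 0 ≤ succMin F m :=
  Real.sInf_nonneg fun _ h ↦ h.1.le

theorem succMin_le {s : Finset (Fin K → ℝ)} (hs : ↑s ⊆ latticeOf F) (hcard : s.card = m)
    (hli : LinearIndependent ℝ fun v : s ↦ (v : Fin K → ℝ)) {r : ℝ} (hr : 0 < r)
    (hle : ∀ v ∈ s, euclNorm v ≤ r) : succMin F m ≤ r :=
  csInf_le ⟨0, fun _ h ↦ h.1.le⟩ ⟨hr, s, hs, hle, hcard, hli⟩

/-- The span of the lattice points whose norm is below the `m`-th successive minimum, which by
minimality has dimension less than `m`. -/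
def shortSpan (F : Matrix (Fin K) (Fin K) ℝ) (m : ℕ) : Submodule ℝ (Fin K → ℝ) :=
  Submodule.span ℝ {x ∈ latticeOf F | euclNorm x < succMin F m}

theorem finrank_shortSpan_lt (hm : 1 ≤ m) : Module.finrank ℝ (shortSpan F m) < m := by
  by_contra! hle
  obtain ⟨t, ht, hcard, -, hli⟩ := Submodule.exists_finset_span_eq_linearIndepOn ℝ
    {x ∈ latticeOf F | euclNorm x < succMin F m}
  obtain ⟨s, hst, hs⟩ := Finset.exists_subset_card_eq (hle.trans_eq hcard.symm)
  have hlis : LinearIndepOn ℝ id (s : Set (Fin K → ℝ)) := hli.mono (mod_cast hst)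
  obtain ⟨v, hv, hmax⟩ := s.exists_max_image euclNorm (Finset.card_pos.1 (hm.trans_eq hs.symm))
  have hsucc : succMin F m ≤ euclNorm v :=
    succMin_le (fun x hx ↦ (ht (hst hx)).1) hs hlis (euclNorm_pos (hlis.ne_zero hv)) hmax
  exact hsucc.not_gt (ht (hst hv)).2

theorem longOff_succMin_sq {u : Fin K → ℝ} (hu : ∀ x ∈ shortSpan F m, u ⬝ᵥ x = 0) :
    LongOff F u (succMin F m ^ 2) := by
  intro w hw
  rw [← Real.le_sqrt succMin_nonneg (dotProduct_self_nonneg _), ← euclNorm_eq_sqrt]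
  by_contra! hlt
  exact hw (hu _ (Submodule.subset_span ⟨⟨w, rfl⟩, hlt⟩))

end SuccMin

end Transference

open Transference

/-- **Banaszczyk's transference theorem.** For an invertible `F : ℝ^{K×K}` and `1 ≤ m ≤ K`,
the successive minima of the lattice generated by `F` and of its dual lattice (generated by
the inverse transpose `F⁻ᵀ`) satisfy `λ_m(F) · λ_{K−m+1}(F⁻ᵀ) ≤ K`. -/
theorem banaszczyk_transference {K : ℕ} (hK : 1 ≤ K)
    (F : Matrix (Fin K) (Fin K) ℝ) (hF : IsUnit F.det)
    (m : ℕ) (hm1 : 1 ≤ m) (hmK : m ≤ K) :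
    succMin F m * succMin (F⁻¹)ᵀ (K - m + 1) ≤ (K : ℝ) := by
  have hproper : shortSpan F m ⊔ shortSpan (F⁻¹)ᵀ (K - m + 1) < ⊤ := by
    refine Submodule.lt_top_of_finrank_lt_finrank ?_
    have hF_lt := finrank_shortSpan_lt (F := F) hm1
    have hdual_lt := finrank_shortSpan_lt (F := (F⁻¹)ᵀ) (m := K - m + 1) (by omega)
    have hsup := Submodule.finrank_add_le_finrank_add_finrank (shortSpan F m)
      (shortSpan (F⁻¹)ᵀ (K - m + 1))
    rw [Module.finrank_fin_fun]
    omega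
  obtain ⟨u, hu, horth⟩ := exists_unit_orthogonal hproper
  have hlong := longOff_succMin_sq fun x hx ↦ horth x (Submodule.mem_sup_left hx)
  have hlong' := longOff_succMin_sq fun x hx ↦ horth x (Submodule.mem_sup_right hx)
  have hsq := hlong.mul_le_card_sq hlong' (sq_nonneg _) hF hu
  rw [← mul_pow, Fintype.card_fin] at hsq
  exact (sq_le_sq₀ (mul_nonneg succMin_nonneg succMin_nonneg) K.cast_nonneg).1 hsq
end

section
/- Let H ∈ ℝ^{L×K}, P > 0, D ∈ ℝ^{L×L} diagonal with nonnegative diagonal entries, and a ∈ ℝ^K. Let b = P (P H Hᵀ + I + D)^{-1} H a be the MMSE equalizer. Then the effective noise variance satisfies σ_eff²(b, a) = P·‖Hᵀ b − a‖² + bᵀ (I + D) b = aᵀ (P^{-1} I + Hᵀ (I + D)^{-1} H)^{-1} a. -/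
open Matrix

/-! Let `Q` be the signal covariance and `S` the noise covariance. Writing `r = a - Hᵀ b`, the
normal equations for the MMSE equalizer read `S b = H Q r`. Hence `bᵀ S b = (Hᵀ b)ᵀ Q r`, and adding
`rᵀ Q r` leaves `aᵀ Q r`. Since `Q r` is the Schur complement `Q - Q Hᵀ (H Q Hᵀ + S)⁻¹ H Q` applied
to `a`, the Woodbury identity finishes the computation. -/

theorem inv_smul_one {n K : Type*} [Fintype n] [DecidableEq n] [Field K] {c : K} (hc : c ≠ 0) :
    (c • (1 : Matrix n n K))⁻¹ = c⁻¹ • 1 :=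
  inv_eq_left_inv (by simp [hc])

theorem posDef_mul_mul_transpose_add {m n : Type*} [Finite m] [Fintype n] {Q : Matrix n n ℝ}
    {S : Matrix m m ℝ} (hQ : Q.PosSemidef) (hS : S.PosDef) (H : Matrix m n ℝ) :
    (H * Q * Hᵀ + S).PosDef := by
  have hHQH := hQ.mul_mul_conjTranspose_same H
  rw [conjTranspose_eq_transpose_of_trivial] at hHQH
  exact PosDef.posSemidef_add hHQH hS

section

variable {m n R : Type*} [Fintype m] [Fintype n] [CommRing R]

/-- The effective noise variance of the equalizer `b` for the target coefficients `a` over the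
channel `H`, with signal covariance `Q` and noise covariance `S`. The paper's `σ_eff²(b, a)` is the
case `Q = P • 1`, `S = 1 + D`. -/
def effectiveVariance (H : Matrix m n R) (Q : Matrix n n R) (S : Matrix m m R)
    (b : m → R) (a : n → R) : R :=
  (Hᵀ *ᵥ b - a) ⬝ᵥ Q *ᵥ (Hᵀ *ᵥ b - a) + b ⬝ᵥ S *ᵥ b

theorem effectiveVariance_smul_one [DecidableEq n] (H : Matrix m n R) (P : R) (S : Matrix m m R)
    (b : m → R) (a : n → R) :
    effectiveVariance H (P • 1) S b a =
      P * ∑ i, ((Hᵀ *ᵥ b) i - a i) ^ 2 + b ⬝ᵥ S *ᵥ b := by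
  rw [effectiveVariance, smul_mulVec, one_mulVec, dotProduct_smul, smul_eq_mul]
  simp only [dotProduct, Pi.sub_apply, sq]

theorem effectiveVariance_eq_of_normal_eq {H : Matrix m n R} {Q : Matrix n n R} {S : Matrix m m R}
    {b : m → R} {a : n → R} (hb : (H * Q * Hᵀ + S) *ᵥ b = H *ᵥ Q *ᵥ a) :
    effectiveVariance H Q S b a = a ⬝ᵥ Q *ᵥ (a - Hᵀ *ᵥ b) := by
  have hSb : S *ᵥ b = H *ᵥ Q *ᵥ (a - Hᵀ *ᵥ b) := by
    rw [mulVec_sub, mulVec_sub, ← hb, add_mulVec, ← mulVec_mulVec, ← mulVec_mulVec,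
      add_sub_cancel_left]
  have hbSb : b ⬝ᵥ S *ᵥ b = (Hᵀ *ᵥ b) ⬝ᵥ Q *ᵥ (a - Hᵀ *ᵥ b) := by
    rw [hSb, dotProduct_mulVec, mulVec_transpose]
  rw [effectiveVariance, hbSb, ← neg_sub a, mulVec_neg, neg_dotProduct_neg, ← add_dotProduct,
    sub_add_cancel]

variable [DecidableEq m]

/-- The linear MMSE equalizer for the target coefficients `a` over the channel `H`, with signal
covariance `Q` and noise covariance `S`. -/
noncomputable def mmseEqualizer (H : Matrix m n R) (Q : Matrix n n R) (S : Matrix m m R)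
    (a : n → R) : m → R :=
  (H * Q * Hᵀ + S)⁻¹ *ᵥ H *ᵥ Q *ᵥ a

theorem mulVec_mmseEqualizer {H : Matrix m n R} {Q : Matrix n n R} {S : Matrix m m R}
    (hA : IsUnit (H * Q * Hᵀ + S)) (a : n → R) :
    (H * Q * Hᵀ + S) *ᵥ mmseEqualizer H Q S a = H *ᵥ Q *ᵥ a := by
  rw [mmseEqualizer, mulVec_mulVec, mul_nonsing_inv _ ((isUnit_iff_isUnit_det _).mp hA), one_mulVec]

theorem mmseEqualizer_smul_one [DecidableEq n] (H : Matrix m n R) (P : R) (S : Matrix m m R)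
    (a : n → R) :
    mmseEqualizer H (P • 1) S a = P • (P • (H * Hᵀ) + S)⁻¹ *ᵥ H *ᵥ a := by
  simp [mmseEqualizer, smul_mulVec, mulVec_smul]

theorem inv_inv_add_mul_inv_mul [DecidableEq n] {Q : Matrix n n R} {S : Matrix m m R}
    {U : Matrix n m R} {V : Matrix m n R} (hQ : IsUnit Q) (hS : IsUnit S)
    (hA : IsUnit (V * Q * U + S)) :
    (Q⁻¹ + U * S⁻¹ * V)⁻¹ = Q - Q * U * (V * Q * U + S)⁻¹ * V * Q := by
  have hQQ : Q⁻¹⁻¹ = Q := nonsing_inv_nonsing_inv Q ((isUnit_iff_isUnit_det Q).mp hQ)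
  have hSS : S⁻¹⁻¹ = S := nonsing_inv_nonsing_inv S ((isUnit_iff_isUnit_det S).mp hS)
  have hA' : IsUnit (S⁻¹⁻¹ + V * Q⁻¹⁻¹ * U) := by rwa [hQQ, hSS, add_comm]
  rw [add_mul_mul_inv_eq_sub _ _ _ _ (isUnit_nonsing_inv_iff.mpr hQ)
    (isUnit_nonsing_inv_iff.mpr hS) hA', hQQ, hSS, add_comm S]

theorem mmse_effective_variance_general [DecidableEq n] {H : Matrix m n R} {Q : Matrix n n R}
    {S : Matrix m m R} (hQ : IsUnit Q) (hS : IsUnit S) (hA : IsUnit (H * Q * Hᵀ + S))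
    (a : n → R) :
    effectiveVariance H Q S (mmseEqualizer H Q S a) a =
      a ⬝ᵥ (Q⁻¹ + Hᵀ * S⁻¹ * H)⁻¹ *ᵥ a := by
  rw [effectiveVariance_eq_of_normal_eq (mulVec_mmseEqualizer hA a),
    inv_inv_add_mul_inv_mul hQ hS hA]
  simp only [mmseEqualizer, mulVec_sub, sub_mulVec, mulVec_mulVec, Matrix.mul_assoc]

end

/-- **Woodbury-identity computation of the effective noise variance.** For the MMSE
equalizer `b = P (P H Hᵀ + I + D)⁻¹ H a`, the effective noise variance
`σ_eff²(b,a) = P‖Hᵀ b − a‖² + bᵀ(I+D)b` equals `aᵀ (P⁻¹ I + Hᵀ (I+D)⁻¹ H)⁻¹ a`. -/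
theorem mmse_effective_variance {L K : ℕ} (H : Matrix (Fin L) (Fin K) ℝ)
    (P : ℝ) (hP : 0 < P) (dv : Fin L → ℝ) (hdv : ∀ i, 0 ≤ dv i) (a : Fin K → ℝ) :
    let D : Matrix (Fin L) (Fin L) ℝ := Matrix.diagonal dv
    let b : Fin L → ℝ := P • ((P • (H * Hᵀ) + 1 + D)⁻¹).mulVec (H.mulVec a)
    P * (∑ i, (Hᵀ.mulVec b i - a i) ^ 2) + b ⬝ᵥ ((1 + D).mulVec b) =
      a ⬝ᵥ ((P⁻¹ • (1 : Matrix (Fin K) (Fin K) ℝ) + Hᵀ * (1 + D)⁻¹ * H)⁻¹.mulVec a) := by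
  intro D _
  have hQ : (P • (1 : Matrix (Fin K) (Fin K) ℝ)).PosDef := PosDef.one.smul hP
  have hS : (1 + D).PosDef := PosDef.one.add_posSemidef (PosSemidef.diagonal hdv)
  have hvar := mmse_effective_variance_general hQ.isUnit hS.isUnit
    (posDef_mul_mul_transpose_add hQ.posSemidef hS H).isUnit a
  rwa [effectiveVariance_smul_one, mmseEqualizer_smul_one, inv_smul_one hP.ne',
    ← add_assoc] at hvar
end

section
/- Let H ∈ ℝ^{L×K}, P > 0, d > 0, ΔR > 0, and C ∈ ℝ. Suppose C ≥ R_BT(H, d) and (1/2)·log₂ det(I_L + P H Hᵀ) > L·C − ΔR − L/2. Then d > 2^{−(2ΔR/L + 1)}. -/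
open Matrix

/-!
Adding the identity to a positive semidefinite matrix raises each of its nonnegative eigenvalues,
hence its determinant. Applied to `d⁻¹ • S`, with `S = I + P H Hᵀ` the covariance of the received
signal, this bounds the Berger–Tung rate from below by `(log₂ det S) / (2L) - (log₂ d) / 2`.
Substituting into the two hypotheses cancels `log₂ det S` and leaves a lower bound on `log₂ d`.
-/

section Determinant

open scoped ComplexOrder

variable {𝕜 n : Type*} [RCLike 𝕜] [Fintype n] [DecidableEq n] {A : Matrix n n 𝕜}

lemma det_scalar_add_eq_prod_eigenvalues (hA : A.IsHermitian) (r : 𝕜) :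
    (scalar n r + A).det = ∏ i, (r + hA.eigenvalues i) := by
  have hneg : scalar n (-r) - A = -(scalar n r + A) := by rw [map_neg]; abel
  calc (scalar n r + A).det = (-1) ^ Fintype.card n * A.charpoly.eval (-r) := by
        rw [eval_charpoly, hneg, ← det_neg, neg_neg]
    _ = ∏ i, (r + hA.eigenvalues i) := by
        simp [hA.charpoly_eq, Polynomial.eval_prod, ← Finset.card_univ, ← Finset.prod_const,
          ← Finset.prod_mul_distrib, add_comm]

lemma det_le_det_one_add (hA : A.PosSemidef) : A.det ≤ (1 + A).det := by
  have hdet : (1 + A).det = ∏ i, (1 + hA.isHermitian.eigenvalues i : 𝕜) := by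
    simpa only [map_one] using det_scalar_add_eq_prod_eigenvalues hA.isHermitian 1
  rw [hdet, hA.isHermitian.det_eq_prod_eigenvalues]
  exact Finset.prod_le_prod (fun i _ ↦ RCLike.ofReal_nonneg.mpr (hA.eigenvalues_nonneg i))
    fun i _ ↦ le_add_of_nonneg_left zero_le_one

end Determinant

lemma posDef_one_add_smul_mul_transpose {m n : Type*} [Finite m] [DecidableEq m] [Fintype n]
    (H : Matrix m n ℝ) {P : ℝ} (hP : 0 ≤ P) : (1 + P • (H * Hᵀ)).PosDef :=
  PosDef.one.add_posSemidef <|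
    (conjTranspose_eq_transpose_of_trivial H ▸ posSemidef_self_mul_conjTranspose H).smul hP

section BergerTung

variable {n : Type*} [Fintype n] [DecidableEq n] {S : Matrix n n ℝ} {d : ℝ}

/-- The symmetric Berger–Tung rate, in bits per terminal, at distortion `d` for terminals indexed
by `n` that observe a signal with covariance `S`. The `R_BT(H, d)` of the informal statement is the
case `S = P H Hᵀ + I`. -/
noncomputable def bergerTungRate (S : Matrix n n ℝ) (d : ℝ) : ℝ :=
  1 / (2 * (Fintype.card n : ℝ)) * Real.logb 2 (1 + d⁻¹ • S).det

lemma logb_det_sub_card_mul_logb_le {b : ℝ} (hb : 1 < b) (hS : S.PosDef) (hd : 0 < d) :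
    Real.logb b S.det - Fintype.card n * Real.logb b d ≤ Real.logb b (1 + d⁻¹ • S).det := by
  have hscaled : (d⁻¹ • S).PosDef := hS.smul (inv_pos.mpr hd)
  calc Real.logb b S.det - Fintype.card n * Real.logb b d = Real.logb b (d⁻¹ • S).det := by
        rw [det_smul, Real.logb_mul (by positivity) hS.det_pos.ne', Real.logb_pow, Real.logb_inv]
        ring
    _ ≤ Real.logb b (1 + d⁻¹ • S).det :=
        Real.logb_le_logb_of_le hb hscaled.det_pos (det_le_det_one_add hscaled.posSemidef)

lemma logb_det_div_sub_le_bergerTungRate [Nonempty n] (hS : S.PosDef) (hd : 0 < d) :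
    Real.logb 2 S.det / (2 * Fintype.card n) - Real.logb 2 d / 2 ≤ bergerTungRate S d := by
  calc Real.logb 2 S.det / (2 * Fintype.card n) - Real.logb 2 d / 2
      = 1 / (2 * Fintype.card n) * (Real.logb 2 S.det - Fintype.card n * Real.logb 2 d) := by
        field_simp
    _ ≤ bergerTungRate S d := by
        unfold bergerTungRate
        gcongr
        exact logb_det_sub_card_mul_logb_le one_lt_two hS hd

theorem distortion_lower_bound_general [Nonempty n] {ΔR C : ℝ} (hS : S.PosDef) (hd : 0 < d)
    (hC : bergerTungRate S d ≤ C)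
    (hB : Fintype.card n * C - ΔR - Fintype.card n / 2 < 1 / 2 * Real.logb 2 S.det) :
    (2 : ℝ) ^ (-(2 * ΔR / Fintype.card n + 1)) < d := by
  have : (0 : ℝ) < Fintype.card n := by exact_mod_cast Fintype.card_pos
  have hupper : C - ΔR / Fintype.card n - 1 / 2 < Real.logb 2 S.det / (2 * Fintype.card n) := by
    calc C - ΔR / Fintype.card n - 1 / 2
        = (Fintype.card n * C - ΔR - Fintype.card n / 2) / Fintype.card n := by field_simp
      _ < 1 / 2 * Real.logb 2 S.det / Fintype.card n := by gcongr
      _ = Real.logb 2 S.det / (2 * Fintype.card n) := by field_simp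
  have hlower : Real.logb 2 S.det / (2 * Fintype.card n) - Real.logb 2 d / 2 ≤ C :=
    (logb_det_div_sub_le_bergerTungRate hS hd).trans hC
  rw [← Real.lt_logb_iff_rpow_lt one_lt_two hd, mul_div_assoc]
  linarith

end BergerTung

/-- **Lower bound on the saturating distortion (Lemma 14, first claim).** If
`C ≥ R_BT(H,d) = (1/(2L)) log₂ det(I + (1/d)(P H Hᵀ + I))` and
`(1/2) log₂ det(I + P H Hᵀ) > L·C − ΔR − L/2`, then `d > 2^{−(2ΔR/L + 1)}`. -/
theorem distortion_lower_bound {L K : ℕ} (hL : 0 < L)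
    (H : Matrix (Fin L) (Fin K) ℝ) (P d ΔR C : ℝ)
    (hP : 0 < P) (hd : 0 < d) (hΔR : 0 < ΔR)
    (hC : (1 / (2 * (L : ℝ))) * Real.logb 2 (1 + d⁻¹ • (P • (H * Hᵀ) + 1)).det ≤ C)
    (hB : (L : ℝ) * C - ΔR - (L : ℝ) / 2 <
      (1 / 2) * Real.logb 2 (1 + P • (H * Hᵀ)).det) :
    (2 : ℝ) ^ (-(2 * ΔR / (L : ℝ) + 1)) < d := by
  have : Nonempty (Fin L) := Fin.pos_iff_nonempty.mp hL
  have hrate : bergerTungRate (1 + P • (H * Hᵀ)) d ≤ C := by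
    rwa [bergerTungRate, Fintype.card_fin, add_comm 1 (P • (H * Hᵀ))]
  simpa only [Fintype.card_fin] using
    distortion_lower_bound_general (posDef_one_add_smul_mul_transpose H hP.le) hd hrate
      (by rwa [Fintype.card_fin])
end
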